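/- arXiv:math/0608206 — 2 statements merged into one kernel-verified Lean document; each statement's English description precedes it below -/
import Mathlib

section
/- Let q be a prime and G a cyclic group of order q. Assume: (i) ζ_P extends to a meromorphic function on ℂ which is holomorphic and nonvanishing on {Re s > 1} and has a simple pole at s = 1; (ii) for every nontrivial character ρ of G, L_P(s,ρ) extends to a meromorphic function on ℂ which is holomorphic and nonvanishing on {Re s ≥ 1}. Then for every integer r ≥ 1 there exists a meromorphic function F_r on the half-plane {Re s > 1/q^r} such that F_r(s) = ζ_{P_q}(s)^{q^r} for all s with Re s > 1. -/
open Filter Topology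

/-!
Let `W = ζ_{P_q}`. For a prime `p` with `φ p ≠ 1`, the values `ρ (φ p)` run through all `q`-th roots
of unity as `ρ` runs through the characters of `G`, so `∏_ρ (1 - ρ (φ p) x) = 1 - x ^ q`; if
`φ p = 1`, this product is `(1 - x) ^ q`. Multiplying over `p` gives, for `Re s > 1`,
`W(s) ^ q * ∏_ρ L_P(s, ρ) = ζ_P(s) ^ q * W(q s)`.
Since `ζ_P` and the `L_P(·, ρ)` are meromorphic further to the left, each use of this equation moves
the abscissa of the half-plane from `σ` to `σ / q`, at the cost of one more `q`-th power of `W`.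
-/

section CharacterProduct

theorem prod_one_sub_monoidHom_apply_mul {G R : Type*} [CommGroup G] [Finite G] [CommRing R]
    [IsDomain R] [HasEnoughRootsOfUnity R (Nat.card G)] [Fintype (G →* Rˣ)] {g : G}
    (hg : ∀ a, a ∈ Subgroup.zpowers g) (x : R) :
    ∏ ρ : G →* Rˣ, (1 - (ρ g : R) * x) = 1 - x ^ Nat.card G := by
  obtain ⟨ζ, hζ⟩ := HasEnoughRootsOfUnity.exists_primitiveRoot R (Nat.card G)
  have : HasEnoughRootsOfUnity R (Monoid.exponent G) :=
    HasEnoughRootsOfUnity.of_dvd R Group.exponent_dvd_nat_card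
  have factorization := hζ.pow_sub_pow_eq_prod_sub_mul 1 x Nat.card_pos
  rw [one_pow] at factorization
  have eval_mem : Set.MapsTo (fun ρ : G →* Rˣ ↦ (ρ g : R)) (Finset.univ : Finset (G →* Rˣ))
      (Polynomial.nthRootsFinset (Nat.card G) (1 : R)) := fun ρ _ ↦ by
    rw [SetLike.mem_coe, Polynomial.mem_nthRootsFinset Nat.card_pos, ← Units.val_pow_eq_pow_val,
      ← map_pow, pow_card_eq_one', map_one, Units.val_one]
  have eval_injOn : Set.InjOn (fun ρ : G →* Rˣ ↦ (ρ g : R)) (Finset.univ : Finset (G →* Rˣ)) :=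
    fun ρ _ ρ' _ h ↦ (MonoidHom.eq_iff_eq_on_generator hg ρ ρ').mpr (Units.ext h)
  have card_eq : (Polynomial.nthRootsFinset (Nat.card G) (1 : R)).card =
      (Finset.univ : Finset (G →* Rˣ)).card := by
    rw [hζ.card_nthRootsFinset, Finset.card_univ, ← Nat.card_eq_fintype_card,
      CommGroup.card_monoidHom_of_hasEnoughRootsOfUnity]
  rw [factorization]
  exact Finset.prod_nbij _ eval_mem eval_injOn
    (Finset.surjOn_of_injOn_of_card_le _ eval_mem eval_injOn card_eq.le) fun _ _ ↦ rfl

theorem prod_one_sub_monoidHom_apply_mul_of_prime_card {G R : Type*} [Group G] [DecidableEq G]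
    [CommRing R] [IsDomain R] [HasEnoughRootsOfUnity R (Nat.card G)] [Fintype (G →* Rˣ)]
    (hG : (Nat.card G).Prime) (g : G) (x : R) :
    ∏ ρ : G →* Rˣ, (1 - (ρ g : R) * x) =
      if g = 1 then (1 - x) ^ Nat.card G else 1 - x ^ Nat.card G := by
  have : Fact (Nat.card G).Prime := ⟨hG⟩
  have : Finite G := Nat.finite_of_card_ne_zero hG.ne_zero
  have : IsCyclic G := isCyclic_of_prime_card rfl
  let : CommGroup G := IsCyclic.commGroup
  split_ifs with hg
  · have : HasEnoughRootsOfUnity R (Monoid.exponent G) :=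
      HasEnoughRootsOfUnity.of_dvd R Group.exponent_dvd_nat_card
    simp only [hg, map_one, Units.val_one, one_mul, Finset.prod_const, Finset.card_univ,
      ← Nat.card_eq_fintype_card, CommGroup.card_monoidHom_of_hasEnoughRootsOfUnity G R]
  · exact prod_one_sub_monoidHom_apply_mul (fun _ ↦ mem_zpowers_of_prime_card rfl hg) x

theorem norm_monoidHom_apply_eq_one {G 𝕜 : Type*} [Group G] [Finite G] [NormedDivisionRing 𝕜]
    (ρ : G →* 𝕜ˣ) (g : G) : ‖(ρ g : 𝕜)‖ = 1 :=
  (((Units.coeHom 𝕜).comp ρ).isOfFinOrder (isOfFinOrder_of_finite g)).norm_eq_one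

theorem norm_monoidHom_apply_mul {G 𝕜 : Type*} [Group G] [Finite G] [NormedDivisionRing 𝕜]
    (ρ : G →* 𝕜ˣ) (g : G) (a : 𝕜) : ‖(ρ g : 𝕜) * a‖ = ‖a‖ := by
  rw [norm_mul, norm_monoidHom_apply_eq_one, one_mul]

end CharacterProduct

section InfiniteProduct

variable {ι : Type*}

theorem tprod_ite_eq_tprod_mul_tprod {M : Type*} [CommMonoid M] [TopologicalSpace M]
    [ContinuousMul M] [T2Space M] {p : ι → Prop} [DecidablePred p] {f g : ι → M}
    (hf : Multipliable fun i : {i // p i} ↦ f i) (hg : Multipliable fun i : {i // ¬p i} ↦ g i) :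
    ∏' i, (if p i then f i else g i) = (∏' i : {i // p i}, f i) * ∏' i : {i // ¬p i}, g i := by
  have hsplit := Multipliable.tprod_mul_tprod_compl (f := fun i ↦ if p i then f i else g i)
    (s := {i | p i}) (hf.congr fun i ↦ (if_pos i.2).symm) (hg.congr fun i ↦ (if_neg i.2).symm)
  exact hsplit.symm.trans <|
    congr_arg₂ (· * ·) (tprod_congr fun i ↦ if_pos i.2) (tprod_congr fun i ↦ if_neg i.2)

theorem ne_one_of_norm_lt_one {E : Type*} [SeminormedRing E] [NormOneClass E] {a : E}
    (ha : ‖a‖ < 1) : a ≠ 1 := by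
  rintro rfl
  exact ha.ne norm_one

theorem multipliable_one_sub_of_summable {R : Type*} [NormedCommRing R] [NormOneClass R]
    [CompleteSpace R] {x : ι → R} (hx : Summable fun i ↦ ‖x i‖) :
    Multipliable fun i ↦ 1 - x i := by
  simpa only [sub_eq_add_neg] using
    multipliable_one_add_of_summable (f := fun i ↦ -x i) (by simpa only [norm_neg] using hx)

theorem tprod_one_sub_ne_zero_of_summable {R : Type*} [NormedCommRing R] [NormOneClass R]
    [NormMulClass R] [CompleteSpace R] {x : ι → R} (hx : Summable fun i ↦ ‖x i‖)
    (hx1 : ∀ i, x i ≠ 1) : ∏' i, (1 - x i) ≠ 0 := by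
  simpa only [sub_eq_add_neg] using
    tprod_one_add_ne_zero_of_summable (f := fun i ↦ -x i)
      (fun i ↦ by simpa only [← sub_eq_add_neg] using sub_ne_zero.mpr (hx1 i).symm)
      (by simpa only [norm_neg] using hx)

variable {𝕜 : Type*} [NormedField 𝕜] [CompleteSpace 𝕜] {x : ι → 𝕜}

theorem multipliable_inv_one_sub_of_summable (hx : Summable fun i ↦ ‖x i‖) (hx1 : ∀ i, x i ≠ 1) :
    Multipliable fun i ↦ (1 - x i)⁻¹ :=
  (multipliable_one_sub_of_summable hx).inv₀ (tprod_one_sub_ne_zero_of_summable hx hx1)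

theorem tprod_inv_one_sub_eq_inv (hx : Summable fun i ↦ ‖x i‖) (hx1 : ∀ i, x i ≠ 1) :
    ∏' i, (1 - x i)⁻¹ = (∏' i, (1 - x i))⁻¹ :=
  (multipliable_one_sub_of_summable hx).tprod_inv₀ (tprod_one_sub_ne_zero_of_summable hx hx1)

theorem tprod_inv_one_sub_ne_zero (hx : Summable fun i ↦ ‖x i‖) (hx1 : ∀ i, x i ≠ 1) :
    ∏' i, (1 - x i)⁻¹ ≠ 0 := by
  rw [tprod_inv_one_sub_eq_inv hx hx1]
  exact inv_ne_zero (tprod_one_sub_ne_zero_of_summable hx hx1)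

theorem differentiableOn_tprod_inv_one_sub {f : ι → ℂ → ℂ} {u : ι → ℝ} {U : Set ℂ}
    (hU : IsOpen U) (hu : Summable u) (hf : ∀ i, DifferentiableOn ℂ (f i) U)
    (hfu : ∀ i, ∀ z ∈ U, ‖f i z‖ ≤ u i) (hf1 : ∀ i, ∀ z ∈ U, f i z ≠ 1) :
    DifferentiableOn ℂ (fun z ↦ ∏' i, (1 - f i z)⁻¹) U := by
  have hsum : ∀ z ∈ U, Summable fun i ↦ ‖f i z‖ := fun z hz ↦
    hu.of_nonneg_of_le (fun _ ↦ norm_nonneg _) fun i ↦ hfu i z hz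
  have hprod : HasProdLocallyUniformlyOn (fun i z ↦ 1 - f i z) (fun z ↦ ∏' i, (1 - f i z)) U := by
    simpa only [sub_eq_add_neg] using
      Summable.hasProdLocallyUniformlyOn_one_add (f := fun i z ↦ -f i z) hU hu
        (.of_forall fun i z hz ↦ (norm_neg (f i z)).trans_le (hfu i z hz))
        fun i ↦ (hf i).continuousOn.neg
  have hdiff : DifferentiableOn ℂ (fun z ↦ ∏' i, (1 - f i z)) U :=
    (hasProdLocallyUniformlyOn_iff_tendstoLocallyUniformlyOn.mp hprod).differentiableOn
      (.of_forall fun _ ↦ DifferentiableOn.fun_finsetProd fun i _ ↦ (hf i).const_sub 1) hU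
  refine (hdiff.fun_inv fun z hz ↦
    tprod_one_sub_ne_zero_of_summable (hsum z hz) fun i ↦ hf1 i z hz).congr fun z hz ↦ ?_
  exact tprod_inv_one_sub_eq_inv (hsum z hz) fun i ↦ hf1 i z hz

end InfiniteProduct

section CharacterEulerProduct

variable {ι G : Type*} [Group G] {x : ι → ℂ}

theorem prod_tprod_inv_one_sub_monoidHom [Fintype (G →* ℂˣ)] (hG : (Nat.card G).Prime) (φ : ι → G)
    (hx : Summable fun i ↦ ‖x i‖) (hx1 : ∀ i, ‖x i‖ < 1) :
    ∏ ρ : G →* ℂˣ, ∏' i, (1 - (ρ (φ i) : ℂ) * x i)⁻¹ =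
      (∏' i : {i // φ i = 1}, (1 - x i)⁻¹) ^ Nat.card G *
        ∏' i : {i // φ i ≠ 1}, (1 - x i ^ Nat.card G)⁻¹ := by
  classical
  have : Finite G := Nat.finite_of_card_ne_zero hG.ne_zero
  have : NeZero (Nat.card G) := ⟨hG.ne_zero⟩
  have hL (ρ : G →* ℂˣ) : Multipliable fun i ↦ (1 - (ρ (φ i) : ℂ) * x i)⁻¹ :=
    multipliable_inv_one_sub_of_summable (by simpa only [norm_monoidHom_apply_mul] using hx)
      fun i ↦ ne_one_of_norm_lt_one (by simpa only [norm_monoidHom_apply_mul] using hx1 i)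
  have hsplit : Multipliable fun i : {i // φ i = 1} ↦ (1 - x i)⁻¹ :=
    multipliable_inv_one_sub_of_summable (hx.subtype _)
      fun i ↦ ne_one_of_norm_lt_one (hx1 i)
  have hx_pow (i : ι) : ‖x i ^ Nat.card G‖ ≤ ‖x i‖ := by
    rw [norm_pow]
    exact pow_le_of_le_one (norm_nonneg _) (hx1 i).le hG.ne_zero
  have hnonsplit : Multipliable fun i : {i // φ i ≠ 1} ↦ (1 - x i ^ Nat.card G)⁻¹ :=
    multipliable_inv_one_sub_of_summable
      ((hx.of_nonneg_of_le (fun _ ↦ norm_nonneg _) hx_pow).subtype _)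
      fun i ↦ ne_one_of_norm_lt_one ((hx_pow i).trans_lt (hx1 i))
  calc ∏ ρ : G →* ℂˣ, ∏' i, (1 - (ρ (φ i) : ℂ) * x i)⁻¹
      = ∏' i, ∏ ρ : G →* ℂˣ, (1 - (ρ (φ i) : ℂ) * x i)⁻¹ :=
        (Multipliable.tprod_finsetProd fun ρ _ ↦ hL ρ).symm
    _ = ∏' i, if φ i = 1 then (1 - x i)⁻¹ ^ Nat.card G else (1 - x i ^ Nat.card G)⁻¹ := by
        simp only [Finset.prod_inv_distrib, prod_one_sub_monoidHom_apply_mul_of_prime_card hG,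
          apply_ite Inv.inv, inv_pow]
    _ = (∏' i : {i // φ i = 1}, (1 - x i)⁻¹ ^ Nat.card G) *
          ∏' i : {i // φ i ≠ 1}, (1 - x i ^ Nat.card G)⁻¹ :=
        tprod_ite_eq_tprod_mul_tprod (f := fun i ↦ (1 - x i)⁻¹ ^ Nat.card G)
          (g := fun i ↦ (1 - x i ^ Nat.card G)⁻¹) (hsplit.pow _) hnonsplit
    _ = _ := by rw [hsplit.tprod_pow]

theorem tprod_inv_one_sub_pow_mul_prod_monoidHom [Fintype (G →* ℂˣ)] (hG : (Nat.card G).Prime)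
    (φ : ι → G) (hx : Summable fun i ↦ ‖x i‖) (hx1 : ∀ i, ‖x i‖ < 1) :
    (∏' i : {i // φ i ≠ 1}, (1 - x i)⁻¹) ^ Nat.card G *
        ∏ ρ : G →* ℂˣ, ∏' i, (1 - (ρ (φ i) : ℂ) * x i)⁻¹ =
      (∏' i, (1 - x i)⁻¹) ^ Nat.card G * ∏' i : {i // φ i ≠ 1}, (1 - x i ^ Nat.card G)⁻¹ := by
  have hmul (s : Set ι) : Multipliable fun i : s ↦ (1 - x i)⁻¹ :=
    multipliable_inv_one_sub_of_summable (hx.subtype _)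
      fun i ↦ ne_one_of_norm_lt_one (hx1 i)
  have hsplit : (∏' i : {i // φ i = 1}, (1 - x i)⁻¹) * ∏' i : {i // φ i ≠ 1}, (1 - x i)⁻¹ =
      ∏' i, (1 - x i)⁻¹ :=
    Multipliable.tprod_mul_tprod_compl (f := fun i ↦ (1 - x i)⁻¹) (hmul {i | φ i = 1}) (hmul _)
  rw [prod_tprod_inv_one_sub_monoidHom hG φ hx hx1, ← hsplit, mul_pow]
  ring

end CharacterEulerProduct

section EulerProduct

variable {ι : Type*} {N : ι → ℝ}

/-- The zeta function `ζ(s) = ∏ (1 - N(i)^{-s})⁻¹` of a family of norms `N`. For a subset `Q` of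
the primes, `ζ_Q` is obtained by restricting `N` to the subtype `Q`. -/
noncomputable def eulerZeta (N : ι → ℝ) (s : ℂ) : ℂ :=
  ∏' i, (1 - (N i : ℂ) ^ (-s))⁻¹

/-- The Euler product `∏ (1 - a(i) N(i)^{-s})⁻¹` with coefficients `a`. The function `L_P(s, ρ)`
is the case `a = ρ ∘ φ`. -/
noncomputable def eulerL (N : ι → ℝ) (a : ι → ℂ) (s : ℂ) : ℂ :=
  ∏' i, (1 - a i * (N i : ℂ) ^ (-s))⁻¹

theorem eulerL_one (N : ι → ℝ) (s : ℂ) : eulerL N 1 s = eulerZeta N s := by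
  simp only [eulerL, eulerZeta, Pi.one_apply, one_mul]

theorem norm_ofReal_cpow_neg {t : ℝ} (ht : 0 < t) (s : ℂ) : ‖(t : ℂ) ^ (-s)‖ = t ^ (-s.re) := by
  rw [Complex.norm_cpow_eq_rpow_re_of_pos ht, Complex.neg_re]

theorem norm_ofReal_cpow_neg_lt_one {t : ℝ} (ht : 1 < t) {s : ℂ} (hs : 0 < s.re) :
    ‖(t : ℂ) ^ (-s)‖ < 1 := by
  rw [norm_ofReal_cpow_neg (zero_lt_one.trans ht)]
  exact Real.rpow_lt_one_of_one_lt_of_neg ht (neg_neg_of_pos hs)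

theorem summable_norm_ofReal_cpow_neg (hN : ∀ i, 0 < N i) {s : ℂ}
    (hsum : Summable fun i ↦ N i ^ (-s.re)) : Summable fun i ↦ ‖(N i : ℂ) ^ (-s)‖ := by
  simpa only [norm_ofReal_cpow_neg (hN _)] using hsum

theorem eulerL_ne_zero (hN : ∀ i, 1 < N i) {a : ι → ℂ} (ha : ∀ i, ‖a i‖ ≤ 1) {s : ℂ}
    (hs : 0 < s.re) (hsum : Summable fun i ↦ N i ^ (-s.re)) : eulerL N a s ≠ 0 := by
  have hle (i : ι) : ‖a i * (N i : ℂ) ^ (-s)‖ ≤ ‖(N i : ℂ) ^ (-s)‖ := by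
    rw [norm_mul]
    exact mul_le_of_le_one_left (norm_nonneg _) (ha i)
  exact tprod_inv_one_sub_ne_zero
    ((summable_norm_ofReal_cpow_neg (fun i ↦ zero_lt_one.trans (hN i)) hsum).of_nonneg_of_le
      (fun _ ↦ norm_nonneg _) hle)
    fun i ↦ ne_one_of_norm_lt_one ((hle i).trans_lt (norm_ofReal_cpow_neg_lt_one (hN i) hs))

theorem differentiableOn_eulerZeta (hN : ∀ i, 1 < N i) {σ : ℝ} (hσ : 0 ≤ σ)
    (hsum : Summable fun i ↦ N i ^ (-σ)) :
    DifferentiableOn ℂ (eulerZeta N) {s : ℂ | σ < s.re} := by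
  have hN0 (i : ι) : 0 < N i := zero_lt_one.trans (hN i)
  refine differentiableOn_tprod_inv_one_sub (isOpen_lt continuous_const Complex.continuous_re) hsum
    (fun i ↦ ?_) (fun i s hs ↦ ?_)
    fun i s hs ↦ ne_one_of_norm_lt_one (norm_ofReal_cpow_neg_lt_one (hN i) (hσ.trans_lt hs))
  · exact (differentiable_neg.const_cpow (.inl (mod_cast (hN0 i).ne'))).differentiableOn
  · rw [norm_ofReal_cpow_neg (hN0 i)]
    exact Real.rpow_le_rpow_of_exponent_le (hN i).le (neg_le_neg (le_of_lt hs))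

theorem meromorphicOn_eulerZeta (hN : ∀ i, 1 < N i)
    (hsum : ∀ σ : ℝ, 1 < σ → Summable fun i ↦ N i ^ (-σ)) :
    MeromorphicOn (eulerZeta N) {s : ℂ | 1 < s.re} := by
  intro s hs
  obtain ⟨σ, hσ, hσs⟩ := exists_between (α := ℝ) hs
  exact ((differentiableOn_eulerZeta hN (zero_le_one.trans hσ.le) (hsum σ hσ)).analyticAt
    ((isOpen_lt continuous_const Complex.continuous_re).mem_nhds hσs)).meromorphicAt

theorem eulerZeta_pow_mul_prod_eulerL {G : Type*} [Group G] [Fintype (G →* ℂˣ)]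
    (hG : (Nat.card G).Prime) (φ : ι → G) (hN : ∀ i, 1 < N i) {s : ℂ} (hs : 0 < s.re)
    (hsum : Summable fun i ↦ N i ^ (-s.re)) :
    eulerZeta (fun i : {i // φ i ≠ 1} ↦ N i) s ^ Nat.card G *
        ∏ ρ : G →* ℂˣ, eulerL N (fun i ↦ ρ (φ i)) s =
      eulerZeta N s ^ Nat.card G *
        eulerZeta (fun i : {i // φ i ≠ 1} ↦ N i) (Nat.card G * s) := by
  have cpow_neg_mul (i : ι) :
      (N i : ℂ) ^ (-(Nat.card G * s)) = ((N i : ℂ) ^ (-s)) ^ Nat.card G := by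
    rw [← mul_neg, Complex.cpow_nat_mul]
  simpa only [eulerZeta, eulerL, cpow_neg_mul] using
    tprod_inv_one_sub_pow_mul_prod_monoidHom hG φ
      (summable_norm_ofReal_cpow_neg (fun i ↦ zero_lt_one.trans (hN i)) hsum)
      fun i ↦ norm_ofReal_cpow_neg_lt_one (hN i) hs

end EulerProduct

theorem exists_meromorphicOn_eq_pow_of_pow_eq_mul_comp_mul {q : ℕ} (hq : 0 < q) {W R : ℂ → ℂ}
    (hW : MeromorphicOn W {s : ℂ | 1 < s.re})
    (hWR : ∀ s : ℂ, 1 < s.re → W s ^ q = R s * W (q * s)) (r : ℕ)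
    (hR : MeromorphicOn R {s : ℂ | 1 / (q : ℝ) ^ r < s.re}) :
    ∃ F : ℂ → ℂ, MeromorphicOn F {s : ℂ | 1 / (q : ℝ) ^ r < s.re} ∧
      ∀ s : ℂ, 1 < s.re → F s = W s ^ q ^ r := by
  have hq0 : (0 : ℝ) < q := mod_cast hq
  have hq1 : (1 : ℝ) ≤ q := mod_cast hq
  have re_mul (s : ℂ) : ((q : ℂ) * s).re = q * s.re := by
    rw [← Complex.ofReal_natCast, Complex.re_ofReal_mul]
  induction r with
  | zero => exact ⟨W, by simpa using hW, fun s _ ↦ by rw [pow_zero, pow_one]⟩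
  | succ r ih =>
    have one_div_pow_le : 1 / (q : ℝ) ^ (r + 1) ≤ 1 / (q : ℝ) ^ r :=
      one_div_pow_le_one_div_pow_of_le hq1 r.le_succ
    obtain ⟨F, hF, hFW⟩ := ih (hR.mono_set fun s hs ↦ one_div_pow_le.trans_lt hs)
    refine ⟨fun s ↦ R s ^ q ^ r * F (q * s), fun s hs ↦ ?_, fun s hs ↦ ?_⟩
    · have hqs : 1 / (q : ℝ) ^ r < ((q : ℂ) * s).re := by
        rw [re_mul, ← div_lt_iff₀' hq0, div_div, ← pow_succ]
        exact hs
      have hFq : MeromorphicAt (fun s : ℂ ↦ F (q * s)) s :=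
        (hF _ hqs).comp_analyticAt (g := fun s : ℂ ↦ q * s) (by fun_prop)
      exact ((hR s hs).fun_pow _).fun_mul hFq
    · have hqs : 1 < ((q : ℂ) * s).re := by
        rw [re_mul]
        exact one_lt_mul_of_le_of_lt hq1 hs
      calc R s ^ q ^ r * F (q * s) = (R s * W (q * s)) ^ q ^ r := by rw [hFW _ hqs, mul_pow]
        _ = W s ^ q ^ (r + 1) := by rw [← hWR s hs, ← pow_mul, pow_succ']

theorem zetaPq_pow_meromorphic_continuation_general {P : Type*} {N : P → ℝ} (hN : ∀ p, 1 < N p)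
    (hsum : ∀ σ : ℝ, 1 < σ → Summable fun p ↦ N p ^ (-σ)) {G : Type*} [Group G] {q : ℕ}
    (hq : q.Prime) (hcard : Nat.card G = q) (φ : P → G) (r : ℕ) {Z : ℂ → ℂ}
    (hZ_eq : ∀ s : ℂ, 1 < s.re → Z s = eulerZeta N s)
    (hZ_mero : MeromorphicOn Z {s : ℂ | 1 / (q : ℝ) ^ r < s.re})
    (hL : ∀ ρ : G →* ℂˣ, ρ ≠ 1 → ∃ L : ℂ → ℂ,
      (∀ s : ℂ, 1 < s.re → L s = eulerL N (fun p ↦ ρ (φ p)) s) ∧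
      MeromorphicOn L {s : ℂ | 1 / (q : ℝ) ^ r < s.re}) :
    ∃ F : ℂ → ℂ, MeromorphicOn F {s : ℂ | 1 / (q : ℝ) ^ r < s.re} ∧
      ∀ s : ℂ, 1 < s.re → F s = eulerZeta (fun p : {p // φ p ≠ 1} ↦ N p) s ^ q ^ r := by
  subst hcard
  have : Finite G := Nat.finite_of_card_ne_zero hq.ne_zero
  have := Fintype.ofFinite (G →* ℂˣ)
  have hL_all (ρ : G →* ℂˣ) : ∃ L : ℂ → ℂ,
      (∀ s : ℂ, 1 < s.re → L s = eulerL N (fun p ↦ ρ (φ p)) s) ∧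
      MeromorphicOn L {s : ℂ | 1 / (Nat.card G : ℝ) ^ r < s.re} := by
    rcases eq_or_ne ρ 1 with rfl | hρ
    · exact ⟨Z, fun s hs ↦ (hZ_eq s hs).trans (eulerL_one N s).symm, hZ_mero⟩
    · exact hL ρ hρ
  choose L hL_eq hL_mero using hL_all
  have hW : MeromorphicOn (eulerZeta fun p : {p // φ p ≠ 1} ↦ N p) {s : ℂ | 1 < s.re} :=
    meromorphicOn_eulerZeta (fun p ↦ hN p) fun σ hσ ↦ (hsum σ hσ).subtype {p | φ p ≠ 1}
  refine exists_meromorphicOn_eq_pow_of_pow_eq_mul_comp_mul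
    (R := fun s ↦ Z s ^ Nat.card G / ∏ ρ, L ρ s) hq.pos
    hW (fun s hs ↦ ?_) r fun s hs ↦
      ((hZ_mero s hs).fun_pow _).fun_div (.fun_prod fun ρ _ ↦ hL_mero ρ s hs)
  have hs0 : 0 < s.re := zero_lt_one.trans hs
  have hL_ne : ∏ ρ, L ρ s ≠ 0 := Finset.prod_ne_zero_iff.mpr fun ρ _ ↦ hL_eq ρ s hs ▸
    eulerL_ne_zero hN (fun p ↦ (norm_monoidHom_apply_eq_one ρ (φ p)).le) hs0 (hsum _ hs)
  rw [div_mul_eq_mul_div, eq_div_iff hL_ne, hZ_eq s hs,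
    Finset.prod_congr rfl fun ρ _ ↦ hL_eq ρ s hs]
  exact eulerZeta_pow_mul_prod_eulerL hq φ hN hs0 (hsum _ hs)

/-- Framework: `q` prime, `G` cyclic of order `q`, `φ : P → G`, `P_q = {p : φ(p) ≠ 1}`.
Assume (i) `ζ_P` extends to a function `Z` meromorphic on `ℂ`, holomorphic and nonvanishing
on `{Re s > 1}`, with a simple pole at `s = 1`; (ii) for every nontrivial character `ρ`,
`L_P(·,ρ)` extends to a function meromorphic on `ℂ`, holomorphic and nonvanishing on
`{Re s ≥ 1}`.  Then for every `r ≥ 1` there is a meromorphic `F_r` on `{Re s > 1/q^r}` with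
`F_r(s) = ζ_{P_q}(s)^(q^r)` for `Re s > 1`. -/
theorem zetaPq_pow_meromorphic_continuation {P : Type*} [Countable P] [Infinite P]
    (N : P → ℝ) (hN : ∀ p, 1 < N p)
    (hsum : ∀ σ : ℝ, 1 < σ → Summable fun p => (N p) ^ (-σ))
    {G : Type*} [Group G] [Fintype G] (q : ℕ) (hq : q.Prime) (hcard : Fintype.card G = q)
    (φ : P → G)
    (Z : ℂ → ℂ)
    (hZ_eq : ∀ s : ℂ, 1 < s.re → Z s = ∏' p : P, (1 - (N p : ℂ) ^ (-s))⁻¹)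
    (hZ_mero : MeromorphicOn Z Set.univ)
    (hZ_holo : DifferentiableOn ℂ Z {s : ℂ | 1 < s.re})
    (hZ_ne : ∀ s : ℂ, 1 < s.re → Z s ≠ 0)
    (hZ_pole : ∃ c : ℂ, c ≠ 0 ∧ Tendsto (fun s : ℂ => (s - 1) * Z s) (𝓝[≠] 1) (𝓝 c))
    (hL : ∀ ρ : G →* ℂˣ, ρ ≠ 1 → ∃ L : ℂ → ℂ,
      (∀ s : ℂ, 1 < s.re → L s = ∏' p : P, (1 - (ρ (φ p) : ℂ) * (N p : ℂ) ^ (-s))⁻¹) ∧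
      MeromorphicOn L Set.univ ∧
      (∀ s : ℂ, 1 ≤ s.re → AnalyticAt ℂ L s ∧ L s ≠ 0))
    (r : ℕ) (hr : 1 ≤ r) :
    ∃ F : ℂ → ℂ, MeromorphicOn F {s : ℂ | 1 / (q : ℝ) ^ r < s.re} ∧
      ∀ s : ℂ, 1 < s.re →
        F s = (∏' p : {p : P // φ p ≠ 1}, (1 - (N p.1 : ℂ) ^ (-s))⁻¹) ^ (q ^ r) :=
  zetaPq_pow_meromorphic_continuation_general hN hsum hq (Nat.card_eq_fintype_card.trans hcard) φ r
    hZ_eq (hZ_mero.mono_set (Set.subset_univ _)) fun ρ hρ ↦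
      (hL ρ hρ).imp fun _ h ↦ ⟨h.1, h.2.1.mono_set (Set.subset_univ _)⟩
end

section
/- Let q be a prime and G a cyclic group of order q. Then for every s with Re s > 1, Z_P(s) = ζ_{P_1}(s)^q · ζ_{P_q}(qs); in particular all the infinite products involved converge. -/
/-!
Evaluation at an element `g` of order `d` of a finite abelian group `G` maps the characters of `G`
onto the `d`-th roots of unity, with all fibres of size `|G| / d`. Hence the local factor
`∏ ρ, (1 - ρ g * x)` is `(1 - x ^ d) ^ (|G| / d)`, and grouping the primes `p` by the order of `φ p`
yields a product formula over the divisors `d` of `|G|`. For `|G| = q` prime, the two divisors `1`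
and `q` correspond to `φ p = 1` and `φ p ≠ 1`.
-/

section Characters

theorem exists_isPrimitiveRoot_orderOf {G : Type*} [Group G] [Finite G] (M : Type*) [CommMonoid M]
    [HasEnoughRootsOfUnity M (Monoid.exponent G)] (g : G) :
    ∃ ζ : M, IsPrimitiveRoot ζ (orderOf g) :=
  have := HasEnoughRootsOfUnity.of_dvd M (Monoid.order_dvd_exponent g)
  HasEnoughRootsOfUnity.exists_primitiveRoot M (orderOf g)

variable {G : Type*} [CommGroup G] [Finite G]

theorem exists_monoidHom_apply_eq {M : Type*} [CommMonoid M]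
    [HasEnoughRootsOfUnity M (Monoid.exponent G)] {g : G} {u : Mˣ} (hu : u ^ orderOf g = 1) :
    ∃ ρ : G →* Mˣ, ρ g = u := by
  let H := Subgroup.zpowers g
  let γ : H := ⟨g, Subgroup.mem_zpowers g⟩
  have hγ : ∀ h, h ∈ Subgroup.zpowers γ := by
    rintro ⟨_, k, rfl⟩
    exact ⟨k, rfl⟩
  have hord : orderOf u ∣ orderOf γ := by
    simpa [γ, H, Subgroup.orderOf_mk] using orderOf_dvd_of_pow_eq_one hu
  obtain ⟨ρ, hρ⟩ := MonoidHom.domRestrict_surjective M H (monoidHomOfForallMemZpowers hγ hord)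
  refine ⟨ρ, ?_⟩
  calc ρ g = MonoidHom.domRestrictHom H Mˣ ρ γ := rfl
    _ = u := by rw [hρ, monoidHomOfForallMemZpowers_apply_gen]

open Polynomial

variable {R : Type*} [CommRing R] [IsDomain R] [HasEnoughRootsOfUnity R (Monoid.exponent G)]

theorem mem_nthRootsFinset_orderOf_iff {g : G} {z : R} :
    z ∈ nthRootsFinset (orderOf g) (1 : R) ↔ ∃ ρ : G →* Rˣ, (ρ g : R) = z := by
  rw [mem_nthRootsFinset (orderOf_pos g)]
  constructor
  · intro hz
    obtain ⟨ρ, hρ⟩ := exists_monoidHom_apply_eq (Units.pow_ofPowEqOne hz (orderOf_pos g).ne')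
    exact ⟨ρ, congrArg Units.val hρ⟩
  · rintro ⟨ρ, rfl⟩
    rw [← Units.val_pow_eq_pow_val, ← map_pow, pow_orderOf_eq_one, map_one, Units.val_one]

variable [Fintype (G →* Rˣ)]

open scoped Classical in
theorem card_filter_monoidHom_apply_eq {g : G} {z : R}
    (hz : z ∈ nthRootsFinset (orderOf g) (1 : R)) :
    Finset.card {ρ : G →* Rˣ | (ρ g : R) = z} = Nat.card G / orderOf g := by
  let ev : (G →* Rˣ) →* R := (Units.coeHom R).comp (MonoidHom.eval g)
  have hcard : (nthRootsFinset (orderOf g) (1 : R)).card = orderOf g := by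
    obtain ⟨ζ, hζ⟩ := exists_isPrimitiveRoot_orderOf R g
    exact hζ.card_nthRootsFinset
  have hfiber : ∀ w ∈ nthRootsFinset (orderOf g) (1 : R),
      Finset.card {ρ | ev ρ = w} = Finset.card {ρ | ev ρ = z} := fun w hw =>
    MonoidHom.card_fiber_eq_of_mem_range ev (mem_nthRootsFinset_orderOf_iff.1 hw)
      (mem_nthRootsFinset_orderOf_iff.1 hz)
  refine (Nat.div_eq_of_eq_mul_right (orderOf_pos g) ?_).symm
  calc Nat.card G = Finset.card (Finset.univ : Finset (G →* Rˣ)) := by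
        rw [← CommGroup.card_monoidHom_of_hasEnoughRootsOfUnity G R, Nat.card_eq_fintype_card,
          Finset.card_univ]
    _ = ∑ w ∈ nthRootsFinset (orderOf g) (1 : R), Finset.card {ρ | ev ρ = w} :=
        Finset.card_eq_sum_card_fiberwise fun ρ _ => mem_nthRootsFinset_orderOf_iff.2 ⟨ρ, rfl⟩
    _ = orderOf g * Finset.card {ρ | ev ρ = z} := by
        rw [Finset.sum_congr rfl hfiber, Finset.sum_const, hcard, smul_eq_mul]

theorem prod_monoidHom_one_sub_apply_mul (g : G) (x : R) :
    ∏ ρ : G →* Rˣ, (1 - ρ g * x) = (1 - x ^ orderOf g) ^ (Nat.card G / orderOf g) := by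
  classical
  obtain ⟨ζ, hζ⟩ := exists_isPrimitiveRoot_orderOf R g
  calc ∏ ρ : G →* Rˣ, (1 - ρ g * x)
      = ∏ z ∈ nthRootsFinset (orderOf g) (1 : R), ∏ ρ : G →* Rˣ with (ρ g : R) = z,
          (1 - z * x) :=
        (Finset.prod_fiberwise_of_maps_to'
          (fun ρ _ => mem_nthRootsFinset_orderOf_iff.2 ⟨ρ, rfl⟩) fun z => 1 - z * x).symm
    _ = ∏ z ∈ nthRootsFinset (orderOf g) (1 : R), (1 - z * x) ^ (Nat.card G / orderOf g) :=
        Finset.prod_congr rfl fun z hz => by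
          rw [Finset.prod_const, card_filter_monoidHom_apply_eq hz]
    _ = (1 - x ^ orderOf g) ^ (Nat.card G / orderOf g) := by
        rw [Finset.prod_pow, ← hζ.pow_sub_pow_eq_prod_sub_mul 1 x (orderOf_pos g), one_pow]

end Characters

section InfiniteProducts

theorem multipliable_one_sub_inv_of_summable_norm {ι K : Type*} [NormedField K] [CompleteSpace K]
    {x : ι → K} (hx : ∀ i, x i ≠ 1) (hsum : Summable fun i => ‖x i‖) :
    Multipliable fun i => (1 - x i)⁻¹ := by
  have hsum' : Summable fun i => ‖-x i‖ := by simpa only [norm_neg] using hsum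
  have hx' : ∀ i, 1 + -x i ≠ 0 := fun i => by
    rw [← sub_eq_add_neg]
    exact sub_ne_zero.2 (hx i).symm
  simpa only [sub_eq_add_neg] using
    (multipliable_one_add_of_summable hsum').inv₀ (tprod_one_add_ne_zero_of_summable hx' hsum')

theorem tprod_eq_prod_tprod_fiber {α β γ : Type*} [CommMonoid α] [TopologicalSpace α] [T3Space α]
    [ContinuousMul α] {f : β → α} (hf : Multipliable f) {c : β → γ} {s : Finset γ}
    (hc : ∀ b, c b ∈ s) (hfib : ∀ d ∈ s, Multipliable fun b : {b // c b = d} => f b) :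
    ∏' b, f b = ∏ d ∈ s, ∏' b : {b // c b = d}, f b := by
  let e := Equiv.sigmaFiberEquiv c
  have hempty : ∀ d ∉ s, IsEmpty {b // c b = d} := fun d hd => ⟨fun b => hd (b.2 ▸ hc b)⟩
  have hfib' : ∀ d, Multipliable fun b : {b // c b = d} => f b := fun d => by
    by_cases hd : d ∈ s
    · exact hfib d hd
    · have := hempty d hd
      exact multipliable_empty
  calc ∏' b, f b = ∏' b, f (e b) := (e.tprod_eq f).symm
    _ = ∏' d, ∏' b : {b // c b = d}, f b :=
        Multipliable.tprod_sigma' hfib' ((e.multipliable_iff (f := f)).2 hf)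
    _ = ∏ d ∈ s, ∏' b : {b // c b = d}, f b := tprod_eq_prod fun d hd => by
        have := hempty d hd
        exact tprod_empty

end InfiniteProducts

section CharacterEulerProducts

variable {P K : Type*} [NormedField K] [CompleteSpace K] {x : P → K}

theorem multipliable_one_sub_pow_inv (hx : ∀ p, ‖x p‖ < 1) (hsum : Summable fun p => ‖x p‖)
    {d : ℕ} (hd : d ≠ 0) : Multipliable fun p => (1 - x p ^ d)⁻¹ := by
  refine multipliable_one_sub_inv_of_summable_norm (fun p h => ?_)
    (hsum.of_nonneg_of_le (fun p => norm_nonneg _) fun p => ?_)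
  · simpa [← norm_pow, h] using pow_lt_one₀ (norm_nonneg _) (hx p) hd
  · rw [norm_pow]
    exact pow_le_of_le_one (norm_nonneg _) (hx p).le hd

theorem multipliable_one_sub_monoidHom_mul_inv {G : Type*} [Group G] [Finite G]
    (hx : ∀ p, ‖x p‖ < 1) (hsum : Summable fun p => ‖x p‖) (φ : P → G) (ρ : G →* Kˣ) :
    Multipliable fun p => (1 - ρ (φ p) * x p)⁻¹ := by
  have hnorm : ∀ p, ‖(ρ (φ p) : K) * x p‖ = ‖x p‖ := fun p => by
    have hfin : IsOfFinOrder (ρ (φ p) : K) :=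
      ((Units.coeHom K).comp ρ).isOfFinOrder (isOfFinOrder_of_finite (φ p))
    rw [norm_mul, hfin.norm_eq_one, one_mul]
  refine multipliable_one_sub_inv_of_summable_norm (fun p h => ?_)
    (by simpa only [hnorm] using hsum)
  exact (hx p).ne (by rw [← hnorm, h, norm_one])

theorem tprod_monoidHom_tprod_one_sub_inv {G : Type*} [CommGroup G] [Finite G]
    [HasEnoughRootsOfUnity K (Monoid.exponent G)]
    (hx : ∀ p, ‖x p‖ < 1) (hsum : Summable fun p => ‖x p‖) (φ : P → G) :
    ∏' ρ : G →* Kˣ, ∏' p, (1 - ρ (φ p) * x p)⁻¹ =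
      ∏ d ∈ (Nat.card G).divisors,
        (∏' p : {p // orderOf (φ p) = d}, (1 - x p ^ d)⁻¹) ^ (Nat.card G / d) := by
  have := Fintype.ofFinite (G →* Kˣ)
  let F : P → K := fun p => ∏ ρ : G →* Kˣ, (1 - ρ (φ p) * x p)⁻¹
  have hL := multipliable_one_sub_monoidHom_mul_inv hx hsum φ
  have hF : Multipliable F := multipliable_prod fun ρ _ => hL ρ
  have hlocal : ∀ d, (fun p : {p // orderOf (φ p) = d} => F p) =
      fun p => (1 - x p.1 ^ d)⁻¹ ^ (Nat.card G / d) := by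
    intro d
    ext ⟨p, rfl⟩
    simp only [F, Finset.prod_inv_distrib, prod_monoidHom_one_sub_apply_mul, inv_pow]
  have hζ : ∀ d ∈ (Nat.card G).divisors,
      Multipliable fun p : {p // orderOf (φ p) = d} => (1 - x p ^ d)⁻¹ := fun d hd =>
    multipliable_one_sub_pow_inv (x := fun p : {p // orderOf (φ p) = d} => x p) (fun p => hx p)
      (hsum.subtype _) (Nat.pos_of_mem_divisors hd).ne'
  have horder : ∀ p, orderOf (φ p) ∈ (Nat.card G).divisors := fun p =>
    Nat.mem_divisors.2 ⟨orderOf_dvd_natCard _, Nat.card_pos.ne'⟩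
  calc ∏' ρ : G →* Kˣ, ∏' p, (1 - ρ (φ p) * x p)⁻¹
      = ∏' p, F p := by
        rw [tprod_fintype, ← Multipliable.tprod_finsetProd fun ρ _ => hL ρ]
    _ = ∏ d ∈ (Nat.card G).divisors, ∏' p : {p // orderOf (φ p) = d}, F p :=
        tprod_eq_prod_tprod_fiber hF horder fun d hd => hlocal d ▸ (hζ d hd).pow _
    _ = _ := Finset.prod_congr rfl fun d hd => by
        rw [hlocal, (hζ d hd).tprod_pow]

end CharacterEulerProducts

theorem ZP_eq_zetaP1_pow_mul_zetaPq_general {P : Type*} {N : P → ℝ} (hN : ∀ p, 1 < N p) {s : ℂ}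
    (hs : 0 < s.re) (hsum : Summable fun p => N p ^ (-s.re))
    {G : Type*} [CommGroup G] [Finite G] (φ : P → G) :
    (∀ ρ : G →* ℂˣ, Multipliable fun p => (1 - (ρ (φ p) : ℂ) * (N p : ℂ) ^ (-s))⁻¹) ∧
    (∀ d : ℕ, d ≠ 0 → Multipliable fun p : {p // orderOf (φ p) = d} =>
      (1 - (N p : ℂ) ^ (-((d : ℂ) * s)))⁻¹) ∧
    ∏' ρ : G →* ℂˣ, ∏' p, (1 - (ρ (φ p) : ℂ) * (N p : ℂ) ^ (-s))⁻¹ =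
      ∏ d ∈ (Nat.card G).divisors,
        (∏' p : {p // orderOf (φ p) = d}, (1 - (N p : ℂ) ^ (-((d : ℂ) * s)))⁻¹) ^
          (Nat.card G / d) := by
  have hnorm : ∀ p, ‖(N p : ℂ) ^ (-s)‖ = N p ^ (-s.re) := fun p => by
    rw [Complex.norm_cpow_eq_rpow_re_of_pos (by linarith [hN p]), Complex.neg_re]
  have hlt : ∀ p, ‖(N p : ℂ) ^ (-s)‖ < 1 := fun p => by
    rw [hnorm]
    exact Real.rpow_lt_one_of_one_lt_of_neg (hN p) (neg_neg_of_pos hs)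
  have hsum' : Summable fun p => ‖(N p : ℂ) ^ (-s)‖ := by simpa only [hnorm] using hsum
  have hpow : ∀ (p : P) (d : ℕ), (N p : ℂ) ^ (-((d : ℂ) * s)) = ((N p : ℂ) ^ (-s)) ^ d :=
    fun p d => by rw [← mul_neg, Complex.cpow_nat_mul]
  simp only [hpow]
  exact ⟨multipliable_one_sub_monoidHom_mul_inv hlt hsum' φ,
    fun d hd => multipliable_one_sub_pow_inv
      (x := fun p : {p // orderOf (φ p) = d} => (N p : ℂ) ^ (-s)) (fun p => hlt p)
      (hsum'.subtype _) hd,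
    tprod_monoidHom_tprod_one_sub_inv hlt hsum' φ⟩

/-- Let `q` be a prime, `G` a cyclic group of order `q`, `φ : P → G`.  With
`ζ_Q(s) = ∏_{p ∈ Q} (1 - N(p)^(-s))⁻¹`, `L_P(s,ρ) = ∏_{p ∈ P} (1 - ρ(φ(p)) N(p)^(-s))⁻¹`
and `Z_P(s) = ∏_ρ L_P(s,ρ)` (the product over all characters `ρ : G → ℂˣ`), one has for
`Re s > 1` that `Z_P(s) = ζ_{P₁}(s)^q · ζ_{P_q}(qs)`, all products involved converging. -/
theorem ZP_eq_zetaP1_pow_mul_zetaPq {P : Type*} [Countable P] [Infinite P] (N : P → ℝ)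
    (hN : ∀ p, 1 < N p)
    (hsum : ∀ σ : ℝ, 1 < σ → Summable fun p => (N p) ^ (-σ))
    {G : Type*} [Group G] [Fintype G] (q : ℕ) (hq : q.Prime) (hcard : Fintype.card G = q)
    (φ : P → G) (s : ℂ) (hs : 1 < s.re) :
    (∀ ρ : G →* ℂˣ, Multipliable fun p : P => (1 - (ρ (φ p) : ℂ) * (N p : ℂ) ^ (-s))⁻¹) ∧
    Multipliable (fun p : {p : P // φ p = 1} => (1 - (N p.1 : ℂ) ^ (-s))⁻¹) ∧
    Multipliable (fun p : {p : P // φ p ≠ 1} => (1 - (N p.1 : ℂ) ^ (-((q : ℂ) * s)))⁻¹) ∧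
    (∏' ρ : G →* ℂˣ, ∏' p : P, (1 - (ρ (φ p) : ℂ) * (N p : ℂ) ^ (-s))⁻¹)
      = (∏' p : {p : P // φ p = 1}, (1 - (N p.1 : ℂ) ^ (-s))⁻¹) ^ q
        * ∏' p : {p : P // φ p ≠ 1}, (1 - (N p.1 : ℂ) ^ (-((q : ℂ) * s)))⁻¹ := by
  have : Fact q.Prime := ⟨hq⟩
  have hG : Nat.card G = q := Nat.card_eq_fintype_card.trans hcard
  have := isCyclic_of_prime_card hG
  let _ : CommGroup G := IsCyclic.commGroup
  have hP1 : (fun p => orderOf (φ p) = 1) = fun p => φ p = 1 := by simp only [orderOf_eq_one_iff]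
  have hPq : (fun p => orderOf (φ p) = q) = fun p => φ p ≠ 1 := by
    have hpow : ∀ p, φ p ^ q = 1 := fun p => hG ▸ pow_card_eq_one'
    simp only [orderOf_eq_prime_iff, hpow, true_and, ne_eq]
  obtain ⟨hL, hζ, hZ⟩ :=
    ZP_eq_zetaP1_pow_mul_zetaPq_general hN (zero_lt_one.trans hs) (hsum s.re hs) φ
  have hζ1 := hζ 1 one_ne_zero
  have hζq := hζ q hq.ne_zero
  rw [hG, hq.prod_divisors, mul_comm, Nat.div_one, Nat.div_self hq.pos, pow_one] at hZ
  rw [hP1] at hζ1 hZ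
  rw [hPq] at hζq hZ
  simp only [Nat.cast_one, one_mul] at hζ1 hZ
  exact ⟨hL, hζ1, hζq, hZ⟩
end
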